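/- Let A, B, R, R̃ be nonnegative random variables on a probability space with probability measure ℚ such that: R̃ = A·R + B almost surely; R̃ and R have the same distribution; A and R are independent; ℚ(B > 0) > 0; there is κ > 0 with E(A^κ) = 1 and E(A^κ · max(log A, 0)) < ∞; the conditional distribution of log A given the event {A ≠ 0} is non-arithmetic, i.e. there is no h > 0 with ℚ(log A ∈ hℤ | A ≠ 0) = 1; and E((A R + B)^κ − (A R)^κ) < ∞. Then E(A^κ log A) ∈ (0, ∞) and lim_{t→∞} t^κ ℚ(R > t) = E((A R + B)^κ − (A R)^κ) / (κ · E(A^κ log A)), and this limit belongs to (0, ∞). (In particular, B and R are not assumed independent.) -/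

import Mathlib

open MeasureTheory ProbabilityTheory Filter

/-!
Replacing `A`, `R`, `A R + B` by their `κ`-th powers `V`, `X`, `Z` reduces the claim to the exponent
`κ = 1`: there `E V = 1`, `V` and `X` are independent, `X` and `Z` have the same law, `Z - V X` is
integrable, and the limit of `t ℚ(X > t)` is wanted. Since `X` and `Z` have the same truncated
means, `H x = E[min(X, eˣ)]` solves the renewal equation `H = G + H ⋆ μ`, where `μ` is the law of
`log V` under the tilted measure `V • ℚ` and `G x = E[min(Z, eˣ)] - E[min(V X, eˣ)]` tends to
`E[Z - V X]`.

As `V` is not a.s. equal to its mean, truncating `V X` at `T` loses a fixed fraction of `T` when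
`X ∈ (T, M T]`. This bounds `T ℚ(T < X ≤ M T)`, hence `t ℚ(X > t)`, and makes `H` Lipschitz. So the
increments `H (t + ·) - H t` are precompact, and the increments of any limit point are bounded
harmonic functions for `μ`; by the Choquet–Deny theorem these are constant, so that every limit
point is linear with slope `E[Z - V X] / E[V log V]`. Finally `T ↦ E[min(X, T)]` is concave with
supergradient `ℚ(X > T)`, which lets one pass from the increments of `H` to the tail of `X`.
-/

section EquicontinuousFamilies

variable {α E : Type*} [TopologicalSpace α] [PseudoMetricSpace E]

theorem exists_subseq_tendsto_of_equicontinuous [TopologicalSpace.SeparableSpace α] {F : ℕ → α → E}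
    {K : α → Set E} (hF : Equicontinuous F) (hK : ∀ x, IsCompact (K x))
    (hFK : ∀ n x, F n x ∈ K x) :
    ∃ φ : ℕ → ℕ, StrictMono φ ∧
      ∃ f : α → E, ∀ x, Tendsto (fun n => F (φ n) x) atTop (nhds (f x)) := by
  obtain ⟨s, hs_countable, hs_dense⟩ := TopologicalSpace.exists_countable_dense α
  have := hs_countable.to_subtype
  obtain ⟨f, -, φ, hφ, hlim⟩ := (isCompact_univ_pi fun q : s => hK q).tendsto_subseq
    (x := fun n (q : s) => F n q) fun n q _ => hFK n q
  rw [tendsto_pi_nhds] at hlim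
  suffices hconv : ∀ x, ∃ y, Tendsto (fun n => F (φ n) x) atTop (nhds y) from
    ⟨φ, hφ, Classical.skolem.mp hconv⟩
  intro x
  suffices hcauchy : CauchySeq fun n => F (φ n) x by
    obtain ⟨y, -, hy⟩ := cauchySeq_tendsto_of_isComplete (hK x).isComplete
      (fun n => hFK (φ n) x) hcauchy
    exact ⟨y, hy⟩
  refine Metric.cauchySeq_iff'.mpr fun ε hε => ?_
  obtain ⟨q, hq, hqs⟩ := hs_dense.inter_nhds_nonempty
    (Metric.equicontinuousAt_iff_right.mp (hF x) (ε / 3) (by positivity))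
  obtain ⟨N, hN⟩ :=
    Metric.cauchySeq_iff'.mp (hlim ⟨q, hq⟩).cauchySeq (ε / 3) (by positivity)
  refine ⟨N, fun n hn => ?_⟩
  calc dist (F (φ n) x) (F (φ N) x)
      ≤ dist (F (φ n) x) (F (φ n) q) + dist (F (φ n) q) (F (φ N) q)
        + dist (F (φ N) q) (F (φ N) x) := dist_triangle4 _ _ _ _
    _ < ε / 3 + ε / 3 + ε / 3 := by
        rw [dist_comm (F (φ N) q)]
        exact add_lt_add (add_lt_add (hqs (φ n)) (hN n hn)) (hqs (φ N))
    _ = ε := by ring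

theorem uniformEquicontinuous_translates {G : Type*} [SeminormedAddCommGroup G]
    {z : G → E} (hz : UniformContinuous z) {ι : Type*} (s : ι → G) :
    UniformEquicontinuous fun i x => z (s i + x) := by
  refine Metric.uniformEquicontinuous_iff.mpr fun ε hε => ?_
  obtain ⟨δ, hδ, h⟩ := Metric.uniformContinuous_iff.mp hz ε hε
  exact ⟨δ, hδ, fun x y hxy i => h (by rwa [dist_add_left])⟩

end EquicontinuousFamilies

section ChoquetDeny

/-- A bounded uniformly continuous function `z` which is harmonic for the random walk with
step law `-μ`, that is, a solution of the convolution equation `z = z ⋆ μ`. -/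
structure IsBoundedHarmonic {G : Type*} [SeminormedAddCommGroup G] [MeasurableSpace G]
    (μ : Measure G) (z : G → ℝ) : Prop where
  uniformContinuous : UniformContinuous z
  bounded : ∃ C, ∀ x, |z x| ≤ C
  eq_integral : ∀ x, z x = ∫ y, z (x - y) ∂μ

namespace IsBoundedHarmonic

variable {G : Type*} [SeminormedAddCommGroup G] [MeasurableSpace G] {μ : Measure G} {z w : G → ℝ}

theorem neg (hz : IsBoundedHarmonic μ z) : IsBoundedHarmonic μ fun x => -z x where
  uniformContinuous := hz.uniformContinuous.neg
  bounded := by simpa only [abs_neg] using hz.bounded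
  eq_integral x := by rw [integral_neg, ← hz.eq_integral]

theorem comp_sub_const (hz : IsBoundedHarmonic μ z) (a : G) :
    IsBoundedHarmonic μ fun x => z (x - a) where
  uniformContinuous := hz.uniformContinuous.comp (uniformContinuous_id.sub uniformContinuous_const)
  bounded := hz.bounded.imp fun _ hC x => hC (x - a)
  eq_integral x := by simp only [sub_right_comm x _ a, ← hz.eq_integral]

variable [OpensMeasurableSpace G]

theorem integrable_sub_left [IsFiniteMeasure μ] (hz : IsBoundedHarmonic μ z) (x : G) :
    Integrable (fun y => z (x - y)) μ := by
  obtain ⟨C, hC⟩ := hz.bounded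
  have := hz.uniformContinuous.continuous
  exact .of_bound (by fun_prop : Continuous fun y => z (x - y)).aestronglyMeasurable C
    (.of_forall fun y => hC (x - y))

theorem sub [IsFiniteMeasure μ] (hz : IsBoundedHarmonic μ z) (hw : IsBoundedHarmonic μ w) :
    IsBoundedHarmonic μ fun x => z x - w x where
  uniformContinuous := hz.uniformContinuous.sub hw.uniformContinuous
  bounded := by
    obtain ⟨C, hC⟩ := hz.bounded
    obtain ⟨D, hD⟩ := hw.bounded
    exact ⟨C + D, fun x => (abs_sub _ _).trans (add_le_add (hC x) (hD x))⟩
  eq_integral x := by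
    rw [integral_sub (hz.integrable_sub_left x) (hw.integrable_sub_left x),
      ← hz.eq_integral, ← hw.eq_integral]

theorem exists_subseq_tendsto_translates [TopologicalSpace.SeparableSpace G] [IsFiniteMeasure μ]
    (hz : IsBoundedHarmonic μ z) (s : ℕ → G) :
    ∃ φ : ℕ → ℕ, StrictMono φ ∧ ∃ ζ, IsBoundedHarmonic μ ζ ∧
      ∀ x, Tendsto (fun n => z (s (φ n) + x)) atTop (nhds (ζ x)) := by
  obtain ⟨C, hC⟩ := hz.bounded
  obtain ⟨φ, hφ, ζ, hζ⟩ := exists_subseq_tendsto_of_equicontinuous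
    (K := fun _ => Set.Icc (-C) C)
    (uniformEquicontinuous_translates hz.uniformContinuous s).equicontinuous
    (fun _ => isCompact_Icc) fun n x => abs_le.mp (hC (s n + x))
  refine ⟨φ, hφ, ζ, ⟨?_, ⟨C, fun x => ?_⟩, fun x => ?_⟩, hζ⟩
  · exact Tendsto.uniformContinuous_of_uniformEquicontinuous (tendsto_pi_nhds.mpr hζ)
      (uniformEquicontinuous_translates hz.uniformContinuous (s ∘ φ))
  · exact le_of_tendsto (hζ x).abs (.of_forall fun n => hC _)
  · have hintegral : Tendsto (fun n => ∫ y, z (s (φ n) + (x - y)) ∂μ) atTop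
        (nhds (∫ y, ζ (x - y) ∂μ)) := by
      refine tendsto_integral_of_dominated_convergence (fun _ => C) (fun n => ?_)
        (integrable_const C) (fun n => .of_forall fun y => hC _)
        (.of_forall fun y => hζ (x - y))
      simpa only [add_sub_assoc] using
        (hz.integrable_sub_left (s (φ n) + x)).aestronglyMeasurable
    refine tendsto_nhds_unique (hζ x) (hintegral.congr fun n => ?_)
    simp only [hz.eq_integral (s (φ n) + x), add_sub_assoc]

theorem apply_sub_eq_of_forall_le [IsProbabilityMeasure μ] (hz : IsBoundedHarmonic μ z)
    {x a : G} (hmax : ∀ y, z y ≤ z x) (ha : a ∈ μ.support) : z (x - a) = z x := by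
  have hcont := hz.uniformContinuous.continuous
  have hint : Integrable (fun y => z x - z (x - y)) μ :=
    (integrable_const _).sub (hz.integrable_sub_left x)
  have hzero : ∫ y, (z x - z (x - y)) ∂μ = 0 := by
    rw [integral_sub (integrable_const _) (hz.integrable_sub_left x), ← hz.eq_integral]
    simp
  rw [integral_eq_zero_iff_of_nonneg (fun y => sub_nonneg.mpr (hmax (x - y))) hint] at hzero
  have hclosed : IsClosed {y | z x - z (x - y) = 0} := isClosed_eq (by fun_prop) continuous_const
  exact (sub_eq_zero.mp (Measure.support_subset_of_isClosed hclosed hzero ha)).symm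

variable [TopologicalSpace.SeparableSpace G] [IsProbabilityMeasure μ]

/-- Translating so that the increment `z x - z (x - a)` attains its supremum `β`, the maximum
principle propagates the value `β` along `-ℕ a`, and telescoping contradicts boundedness
unless `β ≤ 0`. -/
theorem le_apply_sub_of_mem_support (hz : IsBoundedHarmonic μ z) {a : G} (ha : a ∈ μ.support)
    (x : G) : z x ≤ z (x - a) := by
  set w : G → ℝ := fun y => z y - z (y - a) with hw
  have hw_harm : IsBoundedHarmonic μ w := hz.sub (hz.comp_sub_const a)
  have hbdd : BddAbove (Set.range w) := by
    obtain ⟨C, hC⟩ := hw_harm.bounded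
    exact ⟨C, Set.forall_mem_range.mpr fun y => (abs_le.mp (hC y)).2⟩
  obtain ⟨u, -, hu_tendsto, hu_range⟩ :=
    exists_seq_tendsto_sSup (Set.range_nonempty w) hbdd
  choose s hs using hu_range
  obtain ⟨φ, hφ, ζ, hζ_harm, hζ⟩ := hz.exists_subseq_tendsto_translates s
  set β := sSup (Set.range w)
  have hlim (y : G) : Tendsto (fun n => w (s (φ n) + y)) atTop (nhds (ζ y - ζ (y - a))) := by
    simpa only [hw, add_sub_assoc] using (hζ y).sub (hζ (y - a))
  have hle (y : G) : ζ y - ζ (y - a) ≤ β :=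
    le_of_tendsto (hlim y) (.of_forall fun n => le_csSup hbdd ⟨_, rfl⟩)
  have hzero : ζ 0 - ζ (0 - a) = β := by
    refine tendsto_nhds_unique (hlim 0) ((hu_tendsto.comp hφ.tendsto_atTop).congr fun n => ?_)
    simp only [Function.comp_apply, ← hs, add_zero]
  have hincr (n : ℕ) : ζ (-(n • a)) - ζ (-(n • a) - a) = β := by
    induction n with
    | zero => simpa using hzero
    | succ n ih =>
      have := (hζ_harm.sub (hζ_harm.comp_sub_const a)).apply_sub_eq_of_forall_le
        (fun y => (hle y).trans_eq ih.symm) ha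
      rwa [ih, ← neg_add', ← succ_nsmul] at this
  have htelescope (n : ℕ) : ζ 0 - ζ (-(n • a)) = n * β := by
    induction n with
    | zero => simp
    | succ n ih =>
      have := hincr n
      rw [← neg_add', ← succ_nsmul] at this
      push_cast
      linarith
  obtain ⟨C, hC⟩ := hζ_harm.bounded
  have hβ : β ≤ 0 := by
    by_contra! hpos
    obtain ⟨n, hn⟩ := exists_lt_nsmul hpos (2 * C)
    rw [nsmul_eq_mul, ← htelescope] at hn
    linarith [abs_le.mp (hC 0), abs_le.mp (hC (-(n • a)))]
  exact sub_nonpos.mp ((le_csSup hbdd ⟨x, rfl⟩).trans hβ)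

theorem apply_sub_eq_of_mem_support (hz : IsBoundedHarmonic μ z) {a : G} (ha : a ∈ μ.support)
    (x : G) : z (x - a) = z x :=
  le_antisymm (neg_le_neg_iff.mp (hz.neg.le_apply_sub_of_mem_support ha x))
    (hz.le_apply_sub_of_mem_support ha x)

end IsBoundedHarmonic

/-- A measure on `ℝ` is arithmetic if it is carried by a lattice `hℤ`; the degenerate lattice
`h = 0` is allowed, which makes no difference since `0ℤ ⊆ hℤ`. -/
def IsArithmetic (μ : Measure ℝ) : Prop :=
  ∃ h : ℝ, ∀ᵐ x ∂μ, x ∈ AddSubgroup.zmultiples h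

/-- The group of periods of a function on `ℝ`. -/
def periodSubgroup (z : ℝ → ℝ) : AddSubgroup ℝ where
  carrier := {p | Function.Periodic z p}
  zero_mem' := by simp [Function.Periodic]
  add_mem' := Function.Periodic.add_period
  neg_mem' := Function.Periodic.neg

theorem isClosed_periodSubgroup {z : ℝ → ℝ} (hz : Continuous z) :
    IsClosed (periodSubgroup z : Set ℝ) := by
  have : (periodSubgroup z : Set ℝ) = ⋂ x, {p | z (x + p) = z x} := by
    ext p; simp [periodSubgroup, Function.Periodic]
  rw [this]
  exact isClosed_iInter fun x => isClosed_eq (by fun_prop) continuous_const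

theorem IsBoundedHarmonic.eq_apply_zero {μ : Measure ℝ} [IsProbabilityMeasure μ] {z : ℝ → ℝ}
    (hz : IsBoundedHarmonic μ z) (hμ : ¬ IsArithmetic μ) (x : ℝ) : z x = z 0 := by
  have hsupport : μ.support ⊆ periodSubgroup z := fun a ha y => by
    simpa using (hz.apply_sub_eq_of_mem_support ha (y + a)).symm
  rcases (periodSubgroup z).dense_or_cyclic with hdense | ⟨h, hcyclic⟩
  · have hx : x ∈ periodSubgroup z := by
      rw [← SetLike.mem_coe, ← (isClosed_periodSubgroup hz.uniformContinuous.continuous).closure_eq]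
      exact hdense x
    exact (congrArg z (zero_add x)).symm.trans (hx 0)
  · rw [hcyclic, ← AddSubgroup.zmultiples_eq_closure] at hsupport
    exact absurd ⟨h, mem_of_superset Measure.support_mem_ae hsupport⟩ hμ

end ChoquetDeny

section Renewal

variable {μ : Measure ℝ} {K : NNReal} {D : ℝ} {z : ℝ → ℝ}

theorem norm_apply_sub_apply_sub_le (hz : LipschitzWith K z) (x y : ℝ) :
    ‖z x - z (x - y)‖ ≤ K * |y| := by
  simpa [Real.dist_eq] using hz.dist_le_mul x (x - y)

theorem integrable_apply_sub_apply_sub (hz : LipschitzWith K z) (hμ : Integrable id μ) (x : ℝ) :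
    Integrable (fun y => z x - z (x - y)) μ := by
  have := hz.continuous
  exact (hμ.abs.const_mul (K : ℝ)).mono'
    (by fun_prop : Continuous fun y => z x - z (x - y)).aestronglyMeasurable
    (.of_forall fun y => norm_apply_sub_apply_sub_le hz x y)

theorem integrable_comp_sub_left [IsFiniteMeasure μ] (hz : LipschitzWith K z)
    (hμ : Integrable id μ) (x : ℝ) : Integrable (fun y => z (x - y)) μ :=
  ((integrable_const (z x)).sub (integrable_apply_sub_apply_sub hz hμ x)).congr
    (.of_forall fun y => sub_sub_cancel (z x) (z (x - y)))

variable [IsProbabilityMeasure μ]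

theorem integral_apply_sub_apply_sub (hz : LipschitzWith K z) (hμ : Integrable id μ) (x : ℝ) :
    ∫ y, (z x - z (x - y)) ∂μ = z x - ∫ y, z (x - y) ∂μ := by
  rw [integral_sub (integrable_const _) (integrable_comp_sub_left hz hμ x)]
  simp

theorem isBoundedHarmonic_increment (hz : LipschitzWith K z) (hμ : Integrable id μ)
    (hzD : ∀ x, ∫ y, (z x - z (x - y)) ∂μ = D) (h : ℝ) :
    IsBoundedHarmonic μ fun x => z (x + h) - z x where
  uniformContinuous := by
    have := hz.uniformContinuous
    exact (this.comp (uniformContinuous_id.add uniformContinuous_const)).sub this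
  bounded := ⟨K * |h|, fun x => by simpa using norm_apply_sub_apply_sub_le hz (x + h) h⟩
  eq_integral x := by
    simp only [← add_sub_right_comm x h]
    rw [integral_sub (integrable_comp_sub_left hz hμ _) (integrable_comp_sub_left hz hμ _)]
    have hx := (integral_apply_sub_apply_sub hz hμ x).symm.trans (hzD x)
    have hxh := (integral_apply_sub_apply_sub hz hμ (x + h)).symm.trans (hzD (x + h))
    linarith

theorem eq_mul_of_integral_apply_sub_apply_sub_eq (hμ_arith : ¬ IsArithmetic μ)
    (hμ : Integrable id μ) (hmean : ∫ y, y ∂μ ≠ 0) (hz : LipschitzWith K z) (hz0 : z 0 = 0)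
    (hzD : ∀ x, ∫ y, (z x - z (x - y)) ∂μ = D) (x : ℝ) : z x = x * (D / ∫ y, y ∂μ) := by
  have hadd (x h : ℝ) : z (x + h) = z x + z h := by
    have := (isBoundedHarmonic_increment hz hμ hzD h).eq_apply_zero hμ_arith x
    rw [zero_add, hz0] at this
    linarith
  have hlin (x : ℝ) : z x = x * z 1 := by
    simpa using map_real_smul (AddMonoidHom.mk' z hadd) hz.continuous x 1
  have hslope : D = (∫ y, y ∂μ) * z 1 := by
    rw [← hzD 0, ← integral_mul_const]
    congr with y
    rw [hlin 0, hlin (0 - y)]; ring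
  rw [hlin x, hslope]
  field_simp

theorem exists_subseq_tendsto_increments {H G : ℝ → ℝ} (hμ : Integrable id μ)
    (hH : LipschitzWith K H) (hrenewal : ∀ x, H x = G x + ∫ y, H (x - y) ∂μ)
    (hG : Tendsto G atTop (nhds D)) {s : ℕ → ℝ} (hs : Tendsto s atTop atTop) :
    ∃ φ : ℕ → ℕ, ∃ z, LipschitzWith K z ∧ z 0 = 0 ∧ (∀ x, ∫ y, (z x - z (x - y)) ∂μ = D) ∧
      ∀ x, Tendsto (fun n => H (s (φ n) + x) - H (s (φ n))) atTop (nhds (z x)) := by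
  have hincr_lip (n : ℕ) : LipschitzWith K fun x => H (s n + x) - H (s n) :=
    LipschitzWith.of_dist_le_mul fun x y => by
      simpa [Real.dist_eq] using hH.dist_le_mul (s n + x) (s n + y)
  obtain ⟨φ, hφ, z, hz⟩ := exists_subseq_tendsto_of_equicontinuous
    (K := fun x => Set.Icc (-((K : ℝ) * |x|)) (K * |x|))
    (LipschitzWith.uniformEquicontinuous _ K hincr_lip).equicontinuous
    (fun _ => isCompact_Icc)
    fun n x => abs_le.mp (by simpa using norm_apply_sub_apply_sub_le hH (s n + x) x)
  have hz_lip : LipschitzWith K z :=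
    (isClosed_setOfPred_lipschitzWith K).mem_of_tendsto (tendsto_pi_nhds.mpr hz)
      (.of_forall fun n => hincr_lip (φ n))
  refine ⟨φ, z, hz_lip, tendsto_nhds_unique (hz 0) (by simp), fun x => ?_, hz⟩
  have hintegral : Tendsto (fun n => ∫ y, (H (s (φ n) + x) - H (s (φ n) + x - y)) ∂μ) atTop
      (nhds (∫ y, (z x - z (x - y)) ∂μ)) :=
    tendsto_integral_of_dominated_convergence (fun y => K * |y|)
      (fun n => (integrable_apply_sub_apply_sub hH hμ _).aestronglyMeasurable)
      (hμ.abs.const_mul (K : ℝ))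
      (fun n => .of_forall fun y => norm_apply_sub_apply_sub_le hH _ y)
      (.of_forall fun y => by simpa [add_sub_assoc] using (hz x).sub (hz (x - y)))
  have hGlim : Tendsto (fun n => G (s (φ n) + x)) atTop (nhds D) :=
    hG.comp (tendsto_atTop_add_const_right _ _ (hs.comp hφ.tendsto_atTop))
  refine tendsto_nhds_unique hintegral (hGlim.congr fun n => ?_)
  rw [integral_apply_sub_apply_sub hH hμ, eq_sub_iff_add_eq, ← hrenewal]

theorem tendsto_increment_of_renewal_equation {H G : ℝ → ℝ} (hμ_arith : ¬ IsArithmetic μ)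
    (hμ : Integrable id μ) (hmean : ∫ y, y ∂μ ≠ 0) (hH : LipschitzWith K H)
    (hrenewal : ∀ x, H x = G x + ∫ y, H (x - y) ∂μ) (hG : Tendsto G atTop (nhds D)) (η : ℝ) :
    Tendsto (fun t => H (t + η) - H t) atTop (nhds (η * (D / ∫ y, y ∂μ))) := by
  refine tendsto_of_subseq_tendsto fun s hs => ?_
  obtain ⟨φ, z, hz, hz0, hzD, hlim⟩ := exists_subseq_tendsto_increments hμ hH hrenewal hG hs
  refine ⟨φ, ?_⟩
  rw [← eq_mul_of_integral_apply_sub_apply_sub_eq hμ_arith hμ hmean hz hz0 hzD]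
  exact hlim η

end Renewal

section SizeBias

variable {Ω : Type*} [MeasurableSpace Ω] {Q : Measure Ω} {V : Ω → ℝ}

/-- The law of `log V` under the tilted measure `V • Q`: it is the step law of the random walk
which drives the renewal equation of the multiplicative recursion `X ↦ V * X`. The event `{V = 0}`
has no mass under `V • Q`, so that the value `Real.log 0 = 0` is irrelevant. -/
noncomputable def sizeBiasedLogLaw (Q : Measure Ω) (V : Ω → ℝ) : Measure ℝ :=
  (Q.withDensity fun ω => ENNReal.ofReal (V ω)).map fun ω => Real.log (V ω)

theorem isProbabilityMeasure_sizeBiasedLogLaw (hV : Measurable V) (hV0 : ∀ ω, 0 ≤ V ω)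
    (hVi : Integrable V Q) (hV1 : ∫ ω, V ω ∂Q = 1) :
    IsProbabilityMeasure (sizeBiasedLogLaw Q V) := by
  have : IsProbabilityMeasure (Q.withDensity fun ω => ENNReal.ofReal (V ω)) := by
    constructor
    rw [withDensity_apply _ MeasurableSet.univ, Measure.restrict_univ,
      ← ofReal_integral_eq_lintegral_ofReal hVi (.of_forall hV0), hV1,
      ENNReal.ofReal_one]
  exact Measure.isProbabilityMeasure_map hV.log.aemeasurable

theorem integral_sizeBiasedLogLaw (hV : Measurable V) (hV0 : ∀ ω, 0 ≤ V ω) {f : ℝ → ℝ}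
    (hf : Measurable f) :
    ∫ y, f y ∂(sizeBiasedLogLaw Q V) = ∫ ω, V ω * f (Real.log (V ω)) ∂Q := by
  rw [sizeBiasedLogLaw, integral_map hV.log.aemeasurable hf.aestronglyMeasurable,
    integral_withDensity_eq_integral_toReal_smul hV.ennreal_ofReal
      (.of_forall fun _ => ENNReal.ofReal_lt_top)]
  simp only [ENNReal.toReal_ofReal (hV0 _), smul_eq_mul]

theorem integrable_sizeBiasedLogLaw_iff (hV : Measurable V) (hV0 : ∀ ω, 0 ≤ V ω) {f : ℝ → ℝ}
    (hf : Measurable f) :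
    Integrable f (sizeBiasedLogLaw Q V) ↔ Integrable (fun ω => V ω * f (Real.log (V ω))) Q := by
  rw [sizeBiasedLogLaw, integrable_map_measure hf.aestronglyMeasurable hV.log.aemeasurable,
    integrable_withDensity_iff_integrable_smul' hV.ennreal_ofReal
      (.of_forall fun _ => ENNReal.ofReal_lt_top)]
  simp only [ENNReal.toReal_ofReal (hV0 _), smul_eq_mul, Function.comp_apply]

theorem ae_sizeBiasedLogLaw_iff (hV : Measurable V) (hV0 : ∀ ω, 0 ≤ V ω) {p : ℝ → Prop}
    (hp : MeasurableSet {x | p x}) :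
    (∀ᵐ x ∂(sizeBiasedLogLaw Q V), p x) ↔ ∀ᵐ ω ∂Q, V ω ≠ 0 → p (Real.log (V ω)) := by
  rw [sizeBiasedLogLaw, ae_map_iff hV.log.aemeasurable hp,
    ae_withDensity_iff hV.ennreal_ofReal]
  simp only [ne_eq, ENNReal.ofReal_eq_zero, (hV0 _).ge_iff_eq']

theorem integrable_mul_log [IsFiniteMeasure Q] (hV : Measurable V) (hV0 : ∀ ω, 0 ≤ V ω)
    (hlog : Integrable (fun ω => V ω * max (Real.log (V ω)) 0) Q) :
    Integrable (fun ω => V ω * Real.log (V ω)) Q := by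
  refine (hlog.add (integrable_const 1)).mono' (hV.mul hV.log).aestronglyMeasurable
    (.of_forall fun ω => abs_le.mpr ⟨?_, ?_⟩)
  · have hkl := InformationTheory.klFun_nonneg (hV0 ω)
    have hpos : 0 ≤ V ω * max (Real.log (V ω)) 0 := mul_nonneg (hV0 ω) (le_max_right _ _)
    simp only [InformationTheory.klFun, Pi.add_apply] at hkl ⊢
    linarith [hV0 ω]
  · exact (mul_le_mul_of_nonneg_left (le_max_left _ _) (hV0 ω)).trans
      (le_add_of_nonneg_right zero_le_one)

theorem integral_mul_log_pos [IsProbabilityMeasure Q] (hV0 : ∀ ω, 0 ≤ V ω) (hVi : Integrable V Q)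
    (hV1 : ∫ ω, V ω ∂Q = 1) (hVne : ¬ V =ᵐ[Q] 1)
    (hlog : Integrable (fun ω => V ω * Real.log (V ω)) Q) :
    0 < ∫ ω, V ω * Real.log (V ω) ∂Q := by
  have hlog_add : Integrable (fun ω => V ω * Real.log (V ω) + 1) Q :=
    hlog.add (integrable_const 1)
  have hkl_int : Integrable (fun ω => InformationTheory.klFun (V ω)) Q := hlog_add.sub hVi
  have hkl_eq : ∫ ω, InformationTheory.klFun (V ω) ∂Q = ∫ ω, V ω * Real.log (V ω) ∂Q := by
    simp only [InformationTheory.klFun]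
    rw [integral_sub hlog_add hVi, hV1,
      integral_add hlog (integrable_const 1)]
    simp
  have hkl_nonneg (ω : Ω) : 0 ≤ InformationTheory.klFun (V ω) :=
    InformationTheory.klFun_nonneg (hV0 ω)
  rw [← hkl_eq]
  refine (integral_nonneg hkl_nonneg).lt_of_ne' fun hzero => hVne ?_
  rw [integral_eq_zero_iff_of_nonneg hkl_nonneg hkl_int] at hzero
  exact hzero.mono fun ω hω => (InformationTheory.klFun_eq_zero_iff (hV0 ω)).mp hω

end SizeBias

section TruncatedMean

variable {Ω : Type*} [MeasurableSpace Ω] {Q : Measure Ω} {X Y Z V : Ω → ℝ} {C : NNReal}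

/-- The mean `E[min(X, T)]` of `X` truncated at level `T`: a smoothed version of the tail of `X`
which satisfies a renewal equation in `log T`. -/
noncomputable def truncatedMean (Q : Measure Ω) (X : Ω → ℝ) (T : ℝ) : ℝ :=
  ∫ ω, min (X ω) T ∂Q

theorem integral_comp_prodMk_of_indepFun {β γ E : Type*} [MeasurableSpace β] [MeasurableSpace γ]
    [NormedAddCommGroup E] [NormedSpace ℝ E] [IsFiniteMeasure Q] {X : Ω → β} {Y : Ω → γ}
    (hX : Measurable X) (hY : Measurable Y) (hindep : IndepFun X Y Q) {f : β × γ → E}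
    (hf : StronglyMeasurable f) (hint : Integrable (fun ω => f (X ω, Y ω)) Q) :
    ∫ ω, f (X ω, Y ω) ∂Q = ∫ ω, ∫ ω', f (X ω, Y ω') ∂Q ∂Q := by
  have hprod := hindep.map_prod_eq_prod_map_map hX.aemeasurable hY.aemeasurable
  have hXY := (hX.prodMk hY).aemeasurable (μ := Q)
  have hint_prod : Integrable f ((Q.map X).prod (Q.map Y)) := by
    rwa [← hprod, integrable_map_measure hf.aestronglyMeasurable hXY]
  calc ∫ ω, f (X ω, Y ω) ∂Q = ∫ p, f p ∂((Q.map X).prod (Q.map Y)) := by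
        rw [← hprod, integral_map hXY hf.aestronglyMeasurable]
    _ = ∫ x, ∫ y, f (x, y) ∂(Q.map Y) ∂(Q.map X) := integral_prod _ hint_prod
    _ = ∫ ω, ∫ y, f (X ω, y) ∂(Q.map Y) ∂Q :=
        integral_map hX.aemeasurable hint_prod.integral_prod_left.aestronglyMeasurable
    _ = ∫ ω, ∫ ω', f (X ω, Y ω') ∂Q ∂Q := by
        congr with ω
        exact integral_map hY.aemeasurable
          (hf.comp_measurable measurable_prodMk_left).aestronglyMeasurable

theorem truncatedMean_eq_of_identDistrib (h : IdentDistrib X Y Q Q) (T : ℝ) :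
    truncatedMean Q X T = truncatedMean Q Y T :=
  (h.comp (measurable_id.min measurable_const)).integral_eq

theorem truncatedMean_const_mul {v : ℝ} (hv : 0 < v) (T : ℝ) :
    truncatedMean Q (fun ω => v * X ω) T = v * truncatedMean Q X (T / v) := by
  simp only [truncatedMean, ← integral_const_mul, mul_min_of_nonneg _ _ hv.le,
    mul_div_cancel₀ T hv.ne']

section IsFiniteMeasure

variable [IsFiniteMeasure Q]

theorem integrable_min_const (hX : Measurable X) (hX0 : ∀ ω, 0 ≤ X ω) (T : ℝ) :
    Integrable (fun ω => min (X ω) T) Q := by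
  refine .of_bound (hX.min measurable_const).aestronglyMeasurable |T| (.of_forall fun ω => ?_)
  exact abs_le.mpr ⟨le_min ((neg_nonpos.mpr (abs_nonneg T)).trans (hX0 ω)) (neg_abs_le T),
    (min_le_right _ _).trans (le_abs_self T)⟩

theorem monotone_truncatedMean (hX : Measurable X) (hX0 : ∀ ω, 0 ≤ X ω) :
    Monotone (truncatedMean Q X) := fun S T hST =>
  integral_mono (integrable_min_const hX hX0 S) (integrable_min_const hX hX0 T)
    fun _ => min_le_min_left _ hST

theorem truncatedMean_sub_le (hX : Measurable X) (hX0 : ∀ ω, 0 ≤ X ω) (a b : ℝ) :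
    truncatedMean Q X b - truncatedMean Q X a ≤ (b - a) * Q.real {ω | a < X ω} := by
  have hset : MeasurableSet {ω | a < X ω} := measurableSet_lt measurable_const hX
  calc truncatedMean Q X b - truncatedMean Q X a
      = ∫ ω, (min (X ω) b - min (X ω) a) ∂Q :=
        (integral_sub (integrable_min_const hX hX0 b) (integrable_min_const hX hX0 a)).symm
    _ ≤ ∫ ω, {ω | a < X ω}.indicator (fun _ => b - a) ω ∂Q := by
        refine integral_mono
          ((integrable_min_const hX hX0 b).sub (integrable_min_const hX hX0 a))
          ((integrable_const _).indicator hset) fun ω => ?_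
        by_cases hω : a < X ω
        · simp [hω, min_eq_right hω.le]
        · simp [hω, min_eq_left (not_lt.mp hω)]
    _ = (b - a) * Q.real {ω | a < X ω} := by
        rw [integral_indicator_const _ hset, smul_eq_mul, mul_comm]

theorem antitone_measureReal_lt : Antitone fun t => Q.real {ω | t < X ω} :=
  fun _ _ hst => measureReal_mono fun _ => hst.trans_lt

theorem truncatedMean_eq_intervalIntegral (hX : Measurable X) (hX0 : ∀ ω, 0 ≤ X ω) {T : ℝ}
    (hT : 0 ≤ T) : truncatedMean Q X T = ∫ t in 0..T, Q.real {ω | t < X ω} := by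
  calc truncatedMean Q X T = ∫ t in Set.Ioi 0, Q.real {ω | t < min (X ω) T} :=
        (integrable_min_const hX hX0 T).integral_eq_integral_meas_lt
          (.of_forall fun ω => le_min (hX0 ω) hT)
    _ = ∫ t in Set.Ioo 0 T, Q.real {ω | t < min (X ω) T} := by
        refine setIntegral_eq_of_subset_of_forall_sdiff_eq_zero measurableSet_Ioi
          Set.Ioo_subset_Ioi_self fun t ht => ?_
        have hTt : T ≤ t := not_lt.mp fun h => ht.2 ⟨ht.1, h⟩
        simp [hTt.not_gt]
    _ = ∫ t in Set.Ioo 0 T, Q.real {ω | t < X ω} :=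
        setIntegral_congr_fun measurableSet_Ioo fun t ht => by simp [ht.2]
    _ = ∫ t in 0..T, Q.real {ω | t < X ω} := by
        rw [intervalIntegral.integral_of_le hT, integral_Ioc_eq_integral_Ioo]

theorem lipschitzWith_truncatedMean_exp (hX : Measurable X) (hX0 : ∀ ω, 0 ≤ X ω)
    (htail : ∀ t > 0, t * Q.real {ω | t < X ω} ≤ C) :
    LipschitzWith C fun x => truncatedMean Q X (Real.exp x) := by
  refine LipschitzWith.of_le_add_mul C fun x y => ?_
  rcases le_total x y with hxy | hyx
  · exact (monotone_truncatedMean hX hX0 (Real.exp_le_exp.mpr hxy)).trans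
      (le_add_of_nonneg_right (by positivity))
  have hexp : Real.exp y ≤ Real.exp x := Real.exp_le_exp.mpr hyx
  have hinterval (a b : ℝ) : IntervalIntegrable (fun t => Q.real {ω | t < X ω}) volume a b :=
    antitone_measureReal_lt.intervalIntegrable
  have hpos {t : ℝ} (ht : t ∈ Set.Icc (Real.exp y) (Real.exp x)) : 0 < t :=
    (Real.exp_pos y).trans_le ht.1
  have hincrement : truncatedMean Q X (Real.exp x) - truncatedMean Q X (Real.exp y)
      ≤ C * (x - y) := by
    calc truncatedMean Q X (Real.exp x) - truncatedMean Q X (Real.exp y)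
        = ∫ t in Real.exp y..Real.exp x, Q.real {ω | t < X ω} := by
          rw [truncatedMean_eq_intervalIntegral hX hX0 (Real.exp_pos x).le,
            truncatedMean_eq_intervalIntegral hX hX0 (Real.exp_pos y).le,
            intervalIntegral.integral_interval_sub_left (hinterval _ _) (hinterval _ _)]
      _ ≤ ∫ t in Real.exp y..Real.exp x, (C : ℝ) * t⁻¹ := by
          refine intervalIntegral.integral_mono_on hexp (hinterval _ _) ?_ fun t ht => ?_
          · refine ContinuousOn.intervalIntegrable_of_Icc hexp ?_
            exact continuousOn_const.mul (continuousOn_id.inv₀ fun t ht => (hpos ht).ne')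
          · rw [← div_eq_mul_inv, le_div_iff₀' (hpos ht)]
            exact htail t (hpos ht)
      _ = C * (x - y) := by
          rw [intervalIntegral.integral_const_mul,
            integral_inv_of_pos (Real.exp_pos y) (Real.exp_pos x), ← Real.exp_sub, Real.log_exp]
  rw [Real.dist_eq, abs_of_nonneg (sub_nonneg.mpr hyx)]
  linarith

theorem truncatedMean_sub_le_integral_abs_sub (hY : Measurable Y) (hY0 : ∀ ω, 0 ≤ Y ω)
    (hZ : Measurable Z) (hZ0 : ∀ ω, 0 ≤ Z ω) (hZY : Integrable (fun ω => Z ω - Y ω) Q) (T : ℝ) :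
    truncatedMean Q Z T - truncatedMean Q Y T ≤ ∫ ω, |Z ω - Y ω| ∂Q := by
  have hZT := integrable_min_const (Q := Q) hZ hZ0 T
  have hYT := integrable_min_const (Q := Q) hY hY0 T
  rw [truncatedMean, truncatedMean, ← integral_sub hZT hYT]
  refine integral_mono (hZT.sub hYT) hZY.abs fun ω => (le_abs_self _).trans ?_
  simpa using abs_min_sub_min_le_max (Z ω) T (Y ω) T

theorem tendsto_truncatedMean_sub (hY : Measurable Y) (hY0 : ∀ ω, 0 ≤ Y ω) (hZ : Measurable Z)
    (hZ0 : ∀ ω, 0 ≤ Z ω) (hZY : Integrable (fun ω => Z ω - Y ω) Q) :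
    Tendsto (fun T => truncatedMean Q Z T - truncatedMean Q Y T) atTop
      (nhds (∫ ω, (Z ω - Y ω) ∂Q)) := by
  have hZT := integrable_min_const (Q := Q) hZ hZ0
  have hYT := integrable_min_const (Q := Q) hY hY0
  simp only [truncatedMean, ← integral_sub (hZT _) (hYT _)]
  refine tendsto_integral_filter_of_dominated_convergence (fun ω => |Z ω - Y ω|)
    (.of_forall fun T => ((hZT T).sub (hYT T)).aestronglyMeasurable)
    (.of_forall fun T => .of_forall fun ω => ?_) hZY.abs (.of_forall fun ω => ?_)
  · simpa using abs_min_sub_min_le_max (Z ω) T (Y ω) T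
  · refine tendsto_const_nhds.congr' ?_
    filter_upwards [eventually_ge_atTop (Z ω), eventually_ge_atTop (Y ω)] with T hZ hY
    rw [min_eq_left hZ, min_eq_left hY]

theorem truncatedMean_mul_exp (hV : Measurable V) (hV0 : ∀ ω, 0 ≤ V ω) (hX : Measurable X)
    (hX0 : ∀ ω, 0 ≤ X ω) (hindep : IndepFun V X Q) (x : ℝ) :
    truncatedMean Q (fun ω => V ω * X ω) (Real.exp x)
      = ∫ y, truncatedMean Q X (Real.exp (x - y)) ∂(sizeBiasedLogLaw Q V) := by
  have hmeas : Measurable fun y => truncatedMean Q X (Real.exp (x - y)) :=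
    (monotone_truncatedMean hX hX0).measurable.comp (by fun_prop)
  have hf : Measurable fun p : ℝ × ℝ => min (p.1 * p.2) (Real.exp x) := by fun_prop
  have hint : Integrable (fun ω => min (V ω * X ω) (Real.exp x)) Q :=
    integrable_min_const (hV.mul hX) (fun ω => mul_nonneg (hV0 ω) (hX0 ω)) _
  rw [integral_sizeBiasedLogLaw hV hV0 hmeas]
  refine (integral_comp_prodMk_of_indepFun hV hX hindep hf.stronglyMeasurable hint).trans ?_
  congr with ω
  rcases (hV0 ω).eq_or_lt with hzero | hpos
  · simp [← hzero, min_eq_left (Real.exp_pos x).le]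
  · rw [Real.exp_sub, Real.exp_log hpos]
    exact truncatedMean_const_mul hpos _

end IsFiniteMeasure

end TruncatedMean

section TailBound

variable {Ω : Type*} [MeasurableSpace Ω] {Q : Measure Ω} {V X Z : Ω → ℝ} {M c T : ℝ}

section IsFiniteMeasure

variable [IsFiniteMeasure Q]

theorem truncatedMean_mul_le_mul_truncatedMean (hV : Measurable V) (hV0 : ∀ ω, 0 ≤ V ω)
    {x : ℝ} (hx : 0 ≤ x) (hT : 0 < T) (hxM : x ≤ M * T) :
    truncatedMean Q (fun ω => V ω * x) T ≤ T * truncatedMean Q (fun ω => M * V ω) 1 := by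
  have hMT : 0 ≤ M * T := hx.trans hxM
  calc truncatedMean Q (fun ω => V ω * x) T ≤ truncatedMean Q (fun ω => T * (M * V ω)) T := by
        refine integral_mono
          (integrable_min_const (hV.mul_const x) (fun ω => mul_nonneg (hV0 ω) hx) T)
          (integrable_min_const ((hV.const_mul M).const_mul T) (fun ω => ?_) T)
          fun ω => min_le_min_right T ?_
        · nlinarith [mul_nonneg hMT (hV0 ω)]
        · nlinarith [mul_le_mul_of_nonneg_left hxM (hV0 ω)]
    _ = T * truncatedMean Q (fun ω => M * V ω) 1 := by
        rw [truncatedMean_const_mul hT, div_self hT.ne']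

theorem tendsto_measureReal_lt_atTop (hX : Measurable X) :
    Tendsto (fun t => Q.real {ω | t < X ω}) atTop (nhds 0) := by
  have hempty : ⋂ t : ℝ, {ω | t < X ω} = ∅ := by
    refine Set.eq_empty_of_forall_notMem fun ω hω => ?_
    exact lt_irrefl (X ω) (Set.mem_iInter.mp hω (X ω))
  have hlim := tendsto_measure_iInter_atTop (μ := Q) (s := fun t : ℝ => {ω | t < X ω})
    (fun t => (measurableSet_lt measurable_const hX).nullMeasurableSet)
    (fun s t hst ω => hst.trans_lt) ⟨0, measure_ne_top _ _⟩
  rw [hempty, measure_empty] at hlim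
  exact (ENNReal.tendsto_toReal ENNReal.zero_ne_top).comp hlim

theorem mul_measureReal_lt_le_of_window (hM : 1 < M) (hX : Measurable X)
    (hwindow : ∀ T > 0, T * Q.real {ω | T < X ω ∧ X ω ≤ M * T} ≤ c) (hT : 0 < T) :
    T * Q.real {ω | T < X ω} ≤ c * M / (M - 1) := by
  set K := c * M / (M - 1) with hK
  have hM0 : 0 < M := by linarith
  have hM1 : 0 < M - 1 := by linarith
  have hK_nonneg : 0 ≤ K := by
    have hc : 0 ≤ c := (mul_nonneg hT.le measureReal_nonneg).trans (hwindow T hT)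
    positivity
  have hK_eq : c + K / M = K := by
    rw [hK]; field_simp; ring
  have hstep {T : ℝ} (hT : 0 < T) :
      T * Q.real {ω | T < X ω} ≤ c + T * Q.real {ω | M * T < X ω} := by
    have hcover : {ω | T < X ω} ⊆ {ω | T < X ω ∧ X ω ≤ M * T} ∪ {ω | M * T < X ω} :=
      fun ω hω => (le_or_gt (X ω) (M * T)).imp (⟨hω, ·⟩) id
    have hunion := (measureReal_mono (μ := Q) hcover).trans (measureReal_union_le _ _)
    linarith [mul_le_mul_of_nonneg_left hunion hT.le, hwindow T hT]
  have hiterate (k : ℕ) {T : ℝ} (hT : 0 < T) :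
      T * Q.real {ω | T < X ω} ≤ K + T * Q.real {ω | M ^ k * T < X ω} := by
    induction k generalizing T with
    | zero => simpa using hK_nonneg
    | succ k ih =>
      calc T * Q.real {ω | T < X ω}
          ≤ c + M * T * Q.real {ω | M * T < X ω} / M := by
            rw [mul_assoc M, mul_div_cancel_left₀ _ hM0.ne']
            exact hstep hT
        _ ≤ c + (K + M * T * Q.real {ω | M ^ k * (M * T) < X ω}) / M := by
            gcongr
            exact ih (mul_pos hM0 hT)
        _ = K + T * Q.real {ω | M ^ (k + 1) * T < X ω} := by
            rw [add_div, ← add_assoc, hK_eq, mul_assoc M, mul_div_cancel_left₀ _ hM0.ne',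
              pow_succ, mul_assoc (M ^ k)]
  have hlim : Tendsto (fun k : ℕ => K + T * Q.real {ω | M ^ k * T < X ω}) atTop (nhds K) := by
    simpa using ((tendsto_measureReal_lt_atTop hX).comp
      ((tendsto_pow_atTop_atTop_of_one_lt hM).atTop_mul_const hT)).const_mul T |>.const_add K
  exact ge_of_tendsto' hlim fun k => hiterate k hT

end IsFiniteMeasure

variable [IsProbabilityMeasure Q]

theorem truncatedMean_one_lt_one (hV : Measurable V) (hV0 : ∀ ω, 0 ≤ V ω) (hVi : Integrable V Q)
    (hV1 : ∫ ω, V ω ∂Q = 1) (hVne : ¬ V =ᵐ[Q] 1) : truncatedMean Q V 1 < 1 := by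
  have hmin : Integrable (fun ω => min (V ω) 1) Q := integrable_min_const hV hV0 1
  have hle : (fun ω => min (V ω) 1) ≤ᵐ[Q] V := .of_forall fun ω => min_le_left _ _
  have hle_one : (fun ω => min (V ω) 1) ≤ᵐ[Q] fun _ => 1 := .of_forall fun ω => min_le_right _ _
  refine lt_of_le_of_ne ?_ fun heq => hVne ?_
  · simpa [truncatedMean, hV1] using integral_mono_ae hmin hVi hle
  · have hmin_V := (integral_eq_iff_of_ae_le hmin hVi hle).mp (heq.trans hV1.symm)
    have hmin_one := (integral_eq_iff_of_ae_le hmin (integrable_const 1) hle_one).mp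
      (heq.trans (by simp))
    exact hmin_V.symm.trans hmin_one

theorem exists_one_lt_truncatedMean_mul_lt_one (hV : Measurable V) (hV0 : ∀ ω, 0 ≤ V ω)
    (hVi : Integrable V Q) (hV1 : ∫ ω, V ω ∂Q = 1) (hVne : ¬ V =ᵐ[Q] 1) :
    ∃ M > 1, truncatedMean Q (fun ω => M * V ω) 1 < 1 := by
  have hlt := truncatedMean_one_lt_one hV hV0 hVi hV1 hVne
  set ε := (1 - truncatedMean Q V 1) / 2 with hε
  have hε_pos : 0 < ε := by linarith
  refine ⟨1 + ε, by linarith, ?_⟩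
  have hmin := integrable_min_const (Q := Q) hV hV0 1
  calc truncatedMean Q (fun ω => (1 + ε) * V ω) 1
      ≤ ∫ ω, (min (V ω) 1 + ε * V ω) ∂Q := by
        refine integral_mono
          (integrable_min_const (hV.const_mul _) (fun ω => mul_nonneg (by linarith) (hV0 ω)) 1)
          (hmin.add (hVi.const_mul ε)) fun ω => ?_
        dsimp only
        rw [min_add, add_mul, one_mul]
        exact min_le_min_left _ (le_add_of_nonneg_right (mul_nonneg hε_pos.le (hV0 ω)))
    _ = truncatedMean Q V 1 + ε := by
        rw [integral_add hmin (hVi.const_mul ε), integral_const_mul, hV1, mul_one, truncatedMean]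
    _ < 1 := by linarith

theorem truncatedMean_mul_le_min (hV : Measurable V) (hV0 : ∀ ω, 0 ≤ V ω) (hVi : Integrable V Q)
    (hV1 : ∫ ω, V ω ∂Q = 1) {x : ℝ} (hx : 0 ≤ x) :
    truncatedMean Q (fun ω => V ω * x) T ≤ min x T := by
  have hint : Integrable (fun ω => min (V ω * x) T) Q :=
    integrable_min_const (hV.mul_const x) (fun ω => mul_nonneg (hV0 ω) hx) T
  refine le_min ?_ ?_
  · calc truncatedMean Q (fun ω => V ω * x) T ≤ ∫ ω, V ω * x ∂Q :=
          integral_mono hint (hVi.mul_const x) fun ω => min_le_left _ _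
      _ = x := by rw [integral_mul_const, hV1, one_mul]
  · calc truncatedMean Q (fun ω => V ω * x) T ≤ ∫ _, T ∂Q :=
          integral_mono hint (integrable_const T) fun ω => min_le_right _ _
      _ = T := by simp

theorem mul_measureReal_window_le (hV : Measurable V) (hV0 : ∀ ω, 0 ≤ V ω) (hVi : Integrable V Q)
    (hV1 : ∫ ω, V ω ∂Q = 1) (hX : Measurable X) (hX0 : ∀ ω, 0 ≤ X ω) (hindep : IndepFun V X Q)
    (hT : 0 < T) :
    (1 - truncatedMean Q (fun ω => M * V ω) 1) * (T * Q.real {ω | T < X ω ∧ X ω ≤ M * T})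
      ≤ truncatedMean Q X T - truncatedMean Q (fun ω => V ω * X ω) T := by
  set γ := 1 - truncatedMean Q (fun ω => M * V ω) 1 with hγ
  set S := {ω | T < X ω ∧ X ω ≤ M * T}
  have hS : MeasurableSet S :=
    (measurableSet_lt measurable_const hX).inter (measurableSet_le hX measurable_const)
  have hf : Measurable fun p : ℝ × ℝ => min (p.2 * p.1) T := by fun_prop
  have hXT := integrable_min_const (Q := Q) hX hX0 T
  have hloss : Integrable (S.indicator fun _ => γ * T) Q := (integrable_const _).indicator hS
  have hfibre (ω : Ω) :
      truncatedMean Q (fun ω' => V ω' * X ω) T ≤ min (X ω) T - S.indicator (fun _ => γ * T) ω := by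
    by_cases hω : ω ∈ S
    · rw [Set.indicator_of_mem hω, min_eq_right hω.1.le, hγ]
      linarith [truncatedMean_mul_le_mul_truncatedMean (Q := Q) hV hV0 (hX0 ω) hT hω.2]
    · rw [Set.indicator_of_notMem hω, sub_zero]
      exact truncatedMean_mul_le_min hV hV0 hVi hV1 (hX0 ω)
  have hmean : truncatedMean Q (fun ω => V ω * X ω) T ≤ truncatedMean Q X T - γ * T * Q.real S := by
    calc truncatedMean Q (fun ω => V ω * X ω) T
        = ∫ ω, truncatedMean Q (fun ω' => V ω' * X ω) T ∂Q :=
          integral_comp_prodMk_of_indepFun hX hV hindep.symm hf.stronglyMeasurable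
            (integrable_min_const (hV.mul hX) (fun ω => mul_nonneg (hV0 ω) (hX0 ω)) T)
      _ ≤ ∫ ω, (min (X ω) T - S.indicator (fun _ => γ * T) ω) ∂Q :=
          integral_mono_of_nonneg (.of_forall fun ω => integral_nonneg fun ω' =>
            le_min (mul_nonneg (hV0 ω') (hX0 ω)) hT.le) (hXT.sub hloss) (.of_forall hfibre)
      _ = truncatedMean Q X T - γ * T * Q.real S := by
          rw [integral_sub hXT hloss, integral_indicator_const _ hS, smul_eq_mul,
            mul_comm (Q.real S), truncatedMean]
  linarith

theorem exists_forall_mul_measureReal_lt_le (hV : Measurable V) (hV0 : ∀ ω, 0 ≤ V ω)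
    (hVi : Integrable V Q) (hV1 : ∫ ω, V ω ∂Q = 1) (hVne : ¬ V =ᵐ[Q] 1) (hX : Measurable X)
    (hX0 : ∀ ω, 0 ≤ X ω) (hindep : IndepFun V X Q) (hZ : Measurable Z) (hZ0 : ∀ ω, 0 ≤ Z ω)
    (hdist : IdentDistrib X Z Q Q) (hZVX : Integrable (fun ω => Z ω - V ω * X ω) Q) :
    ∃ C : NNReal, ∀ t > 0, t * Q.real {ω | t < X ω} ≤ C := by
  obtain ⟨M, hM, hlt⟩ := exists_one_lt_truncatedMean_mul_lt_one hV hV0 hVi hV1 hVne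
  set γ := 1 - truncatedMean Q (fun ω => M * V ω) 1
  have hγ_pos : 0 < γ := sub_pos.mpr hlt
  set c := (∫ ω, |Z ω - V ω * X ω| ∂Q) / γ
  have hwindow : ∀ T > 0, T * Q.real {ω | T < X ω ∧ X ω ≤ M * T} ≤ c := fun T hT => by
    rw [le_div_iff₀' hγ_pos]
    calc γ * (T * Q.real {ω | T < X ω ∧ X ω ≤ M * T})
        ≤ truncatedMean Q Z T - truncatedMean Q (fun ω => V ω * X ω) T := by
          rw [← truncatedMean_eq_of_identDistrib hdist]
          exact mul_measureReal_window_le hV hV0 hVi hV1 hX hX0 hindep hT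
      _ ≤ ∫ ω, |Z ω - V ω * X ω| ∂Q :=
          truncatedMean_sub_le_integral_abs_sub (hV.mul hX)
            (fun ω => mul_nonneg (hV0 ω) (hX0 ω)) hZ hZ0 hZVX T
  exact ⟨_, fun t ht => (mul_measureReal_lt_le_of_window hM hX hwindow ht).trans
    (Real.le_coe_toNNReal _)⟩

end TailBound

section ImplicitRenewal

theorem tendsto_div_exp_sub_one :
    Tendsto (fun η : ℝ => η / (Real.exp η - 1)) (nhdsWithin 0 {0}ᶜ) (nhds 1) := by
  have hslope := hasDerivAt_iff_tendsto_slope_zero.mp (Real.hasDerivAt_exp 0)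
  simp only [zero_add, Real.exp_zero, smul_eq_mul] at hslope
  simpa [div_eq_mul_inv, mul_comm] using hslope.inv₀ one_ne_zero

theorem tendsto_exp_mul_of_tendsto_increment {H p : ℝ → ℝ} {L : ℝ}
    (hp : ∀ a b, H b - H a ≤ (Real.exp b - Real.exp a) * p a)
    (hH : ∀ η, Tendsto (fun t => H (t + η) - H t) atTop (nhds (η * L))) :
    Tendsto (fun t => Real.exp t * p t) atTop (nhds L) := by
  have hslope (η t : ℝ) : H (t + η) - H t ≤ (Real.exp η - 1) * (Real.exp t * p t) := by
    refine (hp t (t + η)).trans_eq ?_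
    rw [Real.exp_add]; ring
  have hquotient : Tendsto (fun η => η * L / (Real.exp η - 1)) (nhdsWithin 0 {0}ᶜ) (nhds L) := by
    simpa only [one_mul, div_mul_eq_mul_div] using tendsto_div_exp_sub_one.mul_const L
  have hlim (η : ℝ) : Tendsto (fun t => (H (t + η) - H t) / (Real.exp η - 1)) atTop
      (nhds (η * L / (Real.exp η - 1))) := (hH η).div_const _
  refine tendsto_order.mpr ⟨fun l hl => ?_, fun u hu => ?_⟩
  · obtain ⟨η, hη, hη_pos⟩ := (((hquotient.mono_left (nhdsGT_le_nhdsNE 0)).eventually_const_lt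
      hl).and self_mem_nhdsWithin).exists
    filter_upwards [(hlim η).eventually_const_lt hη] with t ht
    refine ht.trans_le ((div_le_iff₀' ?_).mpr (hslope η t))
    exact sub_pos.mpr (Real.one_lt_exp_iff.mpr hη_pos)
  · obtain ⟨η, hη, hη_neg⟩ := (((hquotient.mono_left (nhdsLT_le_nhdsNE 0)).eventually_lt_const
      hu).and self_mem_nhdsWithin).exists
    filter_upwards [(hlim η).eventually_lt_const hη] with t ht
    refine ((le_div_iff_of_neg' ?_).mpr (hslope η t)).trans_lt ht
    exact sub_neg.mpr (Real.exp_lt_one_iff.mpr hη_neg)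

variable {Ω : Type*} [MeasurableSpace Ω] {Q : Measure Ω} {V X Z : Ω → ℝ}

theorem not_ae_eq_one_of_not_isArithmetic (hV : Measurable V) (hV0 : ∀ ω, 0 ≤ V ω)
    (harith : ¬ IsArithmetic (sizeBiasedLogLaw Q V)) : ¬ V =ᵐ[Q] 1 := fun hone =>
  harith ⟨0, (ae_sizeBiasedLogLaw_iff hV hV0 (by measurability)).mpr
    (hone.mono fun ω hω _ => by simp [hω])⟩

variable [IsProbabilityMeasure Q]

theorem tendsto_mul_measureReal_lt_of_implicit_renewal (hV : Measurable V)
    (hV0 : ∀ ω, 0 ≤ V ω) (hVi : Integrable V Q) (hV1 : ∫ ω, V ω ∂Q = 1)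
    (hlog : Integrable (fun ω => V ω * Real.log (V ω)) Q)
    (harith : ¬ IsArithmetic (sizeBiasedLogLaw Q V)) (hX : Measurable X) (hX0 : ∀ ω, 0 ≤ X ω)
    (hindep : IndepFun V X Q) (hZ : Measurable Z) (hZ0 : ∀ ω, 0 ≤ Z ω)
    (hdist : IdentDistrib X Z Q Q) (hZVX : Integrable (fun ω => Z ω - V ω * X ω) Q) :
    Tendsto (fun t => t * Q.real {ω | t < X ω}) atTop
      (nhds ((∫ ω, (Z ω - V ω * X ω) ∂Q) / ∫ ω, V ω * Real.log (V ω) ∂Q)) := by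
  have := isProbabilityMeasure_sizeBiasedLogLaw hV hV0 hVi hV1
  have hVne := not_ae_eq_one_of_not_isArithmetic hV hV0 harith
  obtain ⟨C, hC⟩ := exists_forall_mul_measureReal_lt_le hV hV0 hVi hV1 hVne hX hX0 hindep
    hZ hZ0 hdist hZVX
  have hmean : ∫ y, y ∂(sizeBiasedLogLaw Q V) = ∫ ω, V ω * Real.log (V ω) ∂Q :=
    integral_sizeBiasedLogLaw hV hV0 measurable_id
  have hmean_pos := integral_mul_log_pos hV0 hVi hV1 hVne hlog
  set H : ℝ → ℝ := fun x => truncatedMean Q X (Real.exp x)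
  set G : ℝ → ℝ := fun x =>
    truncatedMean Q Z (Real.exp x) - truncatedMean Q (fun ω => V ω * X ω) (Real.exp x)
  have hG : Tendsto G atTop (nhds (∫ ω, (Z ω - V ω * X ω) ∂Q)) :=
    (tendsto_truncatedMean_sub (hV.mul hX) (fun ω => mul_nonneg (hV0 ω) (hX0 ω)) hZ hZ0
      hZVX).comp Real.tendsto_exp_atTop
  have hrenewal (x : ℝ) : H x = G x + ∫ y, H (x - y) ∂(sizeBiasedLogLaw Q V) := by
    rw [← truncatedMean_mul_exp hV hV0 hX hX0 hindep, sub_add_cancel]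
    exact truncatedMean_eq_of_identDistrib hdist _
  have hincrement := tendsto_increment_of_renewal_equation harith
    ((integrable_sizeBiasedLogLaw_iff hV hV0 measurable_id).mpr hlog)
    (by rw [hmean]; exact hmean_pos.ne')
    (lipschitzWith_truncatedMean_exp hX hX0 hC) hrenewal hG
  have hexp := tendsto_exp_mul_of_tendsto_increment
    (fun a b => truncatedMean_sub_le hX hX0 (Real.exp a) (Real.exp b)) hincrement
  rw [← hmean]
  refine (hexp.comp Real.tendsto_log_atTop).congr' ?_
  filter_upwards [eventually_gt_atTop 0] with t ht
  simp only [Function.comp_apply, Real.exp_log ht]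

end ImplicitRenewal

section PowerSubstitution

variable {Ω : Type*} [MeasurableSpace Ω] {Q : Measure Ω} {A B R W Y : Ω → ℝ} {κ : ℝ}

theorem log_rpow_of_nonneg {a : ℝ} (ha : 0 ≤ a) (κ : ℝ) :
    Real.log (a ^ κ) = κ * Real.log a := by
  rcases ha.eq_or_lt with rfl | hpos
  · rcases eq_or_ne κ 0 with rfl | hκ
    · simp
    · simp [Real.zero_rpow hκ]
  · exact Real.log_rpow hpos κ

theorem rpow_mul_log_rpow_of_nonneg {a : ℝ} (ha : 0 ≤ a) (κ : ℝ) :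
    a ^ κ * Real.log (a ^ κ) = κ * (a ^ κ * Real.log a) := by
  rw [log_rpow_of_nonneg ha, mul_left_comm]

theorem integrable_rpow_mul_log [IsFiniteMeasure Q] (hA : Measurable A) (hA0 : ∀ ω, 0 ≤ A ω)
    (hκ : 0 < κ) (hlog : Integrable (fun ω => A ω ^ κ * max (Real.log (A ω)) 0) Q) :
    Integrable (fun ω => A ω ^ κ * Real.log (A ω)) Q := by
  have hlog_pow : Integrable (fun ω => A ω ^ κ * max (Real.log (A ω ^ κ)) 0) Q := by
    refine (hlog.const_mul κ).congr (.of_forall fun ω => ?_)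
    dsimp only
    rw [log_rpow_of_nonneg (hA0 ω), mul_left_comm, mul_max_of_nonneg _ _ hκ.le, mul_zero]
  have hint := integrable_mul_log (hA.pow_const κ) (fun ω => Real.rpow_nonneg (hA0 ω) κ) hlog_pow
  simp only [rpow_mul_log_rpow_of_nonneg (hA0 _)] at hint
  exact (integrable_const_mul_iff hκ.ne'.isUnit _).mp hint

theorem integral_rpow_mul_log_pos [IsProbabilityMeasure Q] (hA : Measurable A)
    (hA0 : ∀ ω, 0 ≤ A ω) (hκ : 0 < κ) (hAκ : Integrable (fun ω => A ω ^ κ) Q)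
    (hAκ1 : ∫ ω, A ω ^ κ ∂Q = 1) (hlog : Integrable (fun ω => A ω ^ κ * Real.log (A ω)) Q)
    (harith : ¬ IsArithmetic (sizeBiasedLogLaw Q fun ω => A ω ^ κ)) :
    0 < ∫ ω, A ω ^ κ * Real.log (A ω) ∂Q := by
  have hpow0 (ω : Ω) : 0 ≤ A ω ^ κ := Real.rpow_nonneg (hA0 ω) κ
  have hpos := integral_mul_log_pos hpow0 hAκ hAκ1
    (not_ae_eq_one_of_not_isArithmetic (hA.pow_const κ) hpow0 harith)
  simp only [rpow_mul_log_rpow_of_nonneg (hA0 _)] at hpos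
  rw [integral_const_mul] at hpos
  exact pos_of_mul_pos_right (hpos (hlog.const_mul κ)) hκ.le

theorem IsArithmetic.exists_pos {μ : Measure ℝ} (hμ : IsArithmetic μ) :
    ∃ h > (0 : ℝ), ∀ᵐ x ∂μ, ∃ n : ℤ, x = n * h := by
  obtain ⟨h, hh⟩ := hμ
  rcases eq_or_ne h 0 with rfl | hne
  · exact ⟨1, one_pos, hh.mono fun x hx => ⟨0, by simpa using hx⟩⟩
  · refine ⟨|h|, abs_pos.mpr hne, hh.mono fun x hx => ?_⟩
    rw [← zmultiples_abs, AddSubgroup.mem_zmultiples_iff] at hx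
    obtain ⟨n, rfl⟩ := hx
    exact ⟨n, zsmul_eq_mul _ _⟩

theorem exists_log_mem_lattice_of_isArithmetic (hA : Measurable A) (hA0 : ∀ ω, 0 ≤ A ω)
    (hκ : 0 < κ) (harith : IsArithmetic (sizeBiasedLogLaw Q fun ω => A ω ^ κ)) :
    ∃ h > (0 : ℝ), ∀ᵐ ω ∂Q, A ω ≠ 0 → ∃ n : ℤ, Real.log (A ω) = n * h := by
  obtain ⟨h, hh, hlattice⟩ := harith.exists_pos
  refine ⟨h / κ, div_pos hh hκ, ?_⟩
  have hmeas : MeasurableSet {x : ℝ | ∃ n : ℤ, x = n * h} := by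
    simp only [Set.ofPred_exists]
    exact .iUnion fun n => measurableSet_eq
  rw [ae_sizeBiasedLogLaw_iff (hA.pow_const κ) (fun ω => Real.rpow_nonneg (hA0 ω) κ) hmeas]
    at hlattice
  filter_upwards [hlattice] with ω hω hAω
  obtain ⟨n, hn⟩ := hω (Real.rpow_ne_zero (hA0 ω) hκ.ne' |>.mpr hAω)
  rw [log_rpow_of_nonneg (hA0 ω)] at hn
  exact ⟨n, by rw [mul_div_assoc', eq_div_iff hκ.ne', mul_comm, hn]⟩

theorem tendsto_rpow_mul_measureReal_lt_of_rpow (hR0 : ∀ ω, 0 ≤ R ω) (hκ : 0 < κ) {l : Filter ℝ}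
    (hR : Tendsto (fun t => t * Q.real {ω | t < R ω ^ κ}) atTop l) :
    Tendsto (fun t => t ^ κ * Q.real {ω | t < R ω}) atTop l := by
  refine (hR.comp (tendsto_rpow_atTop hκ)).congr' ?_
  filter_upwards [eventually_ge_atTop 0] with t ht
  simp only [Function.comp_apply, Real.rpow_lt_rpow_iff ht (hR0 _) hκ]

theorem integral_add_rpow_sub_rpow_pos (hY0 : ∀ ω, 0 ≤ Y ω) (hB0 : ∀ ω, 0 ≤ B ω)
    (hBpos : 0 < Q {ω | 0 < B ω}) (hκ : 0 < κ)
    (hint : Integrable (fun ω => (Y ω + B ω) ^ κ - Y ω ^ κ) Q) :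
    0 < ∫ ω, ((Y ω + B ω) ^ κ - Y ω ^ κ) ∂Q := by
  rw [integral_pos_iff_support_of_nonneg (fun ω => sub_nonneg.mpr
    (Real.rpow_le_rpow (hY0 ω) (le_add_of_nonneg_right (hB0 ω)) hκ.le)) hint]
  refine hBpos.trans_le (measure_mono fun ω hω => ?_)
  exact (sub_pos.mpr (Real.rpow_lt_rpow (hY0 ω) (lt_add_of_pos_right _ hω) hκ)).ne'

theorem tendsto_rpow_mul_measureReal_lt_of_implicit_renewal [IsProbabilityMeasure Q]
    (hA : Measurable A) (hA0 : ∀ ω, 0 ≤ A ω) (hκ : 0 < κ)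
    (hAκ : Integrable (fun ω => A ω ^ κ) Q) (hAκ1 : ∫ ω, A ω ^ κ ∂Q = 1)
    (hlog : Integrable (fun ω => A ω ^ κ * Real.log (A ω)) Q)
    (harith : ¬ IsArithmetic (sizeBiasedLogLaw Q fun ω => A ω ^ κ))
    (hR : Measurable R) (hR0 : ∀ ω, 0 ≤ R ω) (hindep : IndepFun A R Q)
    (hW : Measurable W) (hW0 : ∀ ω, 0 ≤ W ω) (hdist : IdentDistrib R W Q Q)
    (hmom : Integrable (fun ω => W ω ^ κ - (A ω * R ω) ^ κ) Q) :
    Tendsto (fun t => t ^ κ * Q.real {ω | t < R ω}) atTop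
      (nhds ((∫ ω, (W ω ^ κ - (A ω * R ω) ^ κ) ∂Q) / (κ * ∫ ω, A ω ^ κ * Real.log (A ω) ∂Q))) := by
  have hpow : Measurable fun x : ℝ => x ^ κ := measurable_id.pow_const κ
  simp only [Real.mul_rpow (hA0 _) (hR0 _)] at hmom ⊢
  rw [← integral_const_mul]
  simp only [← rpow_mul_log_rpow_of_nonneg (hA0 _)]
  exact tendsto_rpow_mul_measureReal_lt_of_rpow hR0 hκ <|
    tendsto_mul_measureReal_lt_of_implicit_renewal
      (hA.pow_const κ) (fun ω => Real.rpow_nonneg (hA0 ω) κ) hAκ hAκ1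
      (by simpa only [rpow_mul_log_rpow_of_nonneg (hA0 _)] using hlog.const_mul κ) harith
      (hR.pow_const κ) (fun ω => Real.rpow_nonneg (hR0 ω) κ) (hindep.comp hpow hpow)
      (hW.pow_const κ) (fun ω => Real.rpow_nonneg (hW0 ω) κ) (hdist.comp hpow) hmom

end PowerSubstitution

/-- Goldie-type implicit renewal theorem, with `B` and `R` not assumed independent.
If `R̃ = A·R + B` a.s., `R̃` and `R` have the same law, `A` and `R` are independent,
`ℚ(B > 0) > 0`, `E(A^κ) = 1`, `E(A^κ log⁺ A) < ∞`, the conditional law of `log A` given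
`A ≠ 0` is non-arithmetic, and `E((AR+B)^κ − (AR)^κ) < ∞`, then `E(A^κ log A) ∈ (0,∞)` and
`t^κ ℚ(R > t) → E((AR+B)^κ − (AR)^κ) / (κ E(A^κ log A)) ∈ (0,∞)` as `t → ∞`. -/
theorem stmt_2
    {Ω : Type*} [MeasurableSpace Ω] (Q : Measure Ω) [IsProbabilityMeasure Q]
    (A B R R' : Ω → ℝ)
    (hAm : Measurable A) (hBm : Measurable B) (hRm : Measurable R) (hR'm : Measurable R')
    (hA0 : ∀ ω, 0 ≤ A ω) (hB0 : ∀ ω, 0 ≤ B ω) (hR0 : ∀ ω, 0 ≤ R ω) (hR'0 : ∀ ω, 0 ≤ R' ω)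
    (heq : ∀ᵐ ω ∂Q, R' ω = A ω * R ω + B ω)
    (hdist : Q.map R' = Q.map R)
    (hindep : IndepFun A R Q)
    (hBpos : 0 < Q {ω | 0 < B ω})
    (κ : ℝ) (hκ : 0 < κ)
    (hAκ : ∫ ω, A ω ^ κ ∂Q = 1)
    (hAκ' : Integrable (fun ω => A ω ^ κ) Q)
    (hAκlog : Integrable (fun ω => A ω ^ κ * max (Real.log (A ω)) 0) Q)
    (hnonarith : ¬ ∃ h > (0 : ℝ),
      Q {ω | A ω ≠ 0 ∧ ∃ n : ℤ, Real.log (A ω) = n * h} = Q {ω | A ω ≠ 0})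
    (hmom : Integrable (fun ω => (A ω * R ω + B ω) ^ κ - (A ω * R ω) ^ κ) Q) :
    Integrable (fun ω => A ω ^ κ * Real.log (A ω)) Q ∧
    0 < ∫ ω, A ω ^ κ * Real.log (A ω) ∂Q ∧
    Tendsto (fun t : ℝ => t ^ κ * (Q {ω | t < R ω}).toReal) atTop
      (nhds ((∫ ω, ((A ω * R ω + B ω) ^ κ - (A ω * R ω) ^ κ) ∂Q) /
        (κ * ∫ ω, A ω ^ κ * Real.log (A ω) ∂Q))) ∧
    0 < (∫ ω, ((A ω * R ω + B ω) ^ κ - (A ω * R ω) ^ κ) ∂Q) /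
        (κ * ∫ ω, A ω ^ κ * Real.log (A ω) ∂Q) := by
  have hlog := integrable_rpow_mul_log hAm hA0 hκ hAκlog
  have harith : ¬ IsArithmetic (sizeBiasedLogLaw Q fun ω => A ω ^ κ) := fun hlaw => by
    obtain ⟨h, hh, hlattice⟩ := exists_log_mem_lattice_of_isArithmetic hAm hA0 hκ hlaw
    refine hnonarith ⟨h, hh, measure_congr ?_⟩
    filter_upwards [hlattice] with ω hω
    exact propext (and_iff_left_of_imp hω)
  have hpow_pos := integral_rpow_mul_log_pos hAm hA0 hκ hAκ' hAκ hlog harith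
  have hdist' : IdentDistrib R (fun ω => A ω * R ω + B ω) Q Q :=
    (IdentDistrib.mk hRm.aemeasurable hR'm.aemeasurable hdist.symm).trans
      (.of_ae_eq hR'm.aemeasurable heq)
  have hAR0 (ω : Ω) : 0 ≤ A ω * R ω := mul_nonneg (hA0 ω) (hR0 ω)
  exact ⟨hlog, hpow_pos,
    tendsto_rpow_mul_measureReal_lt_of_implicit_renewal hAm hA0 hκ hAκ' hAκ hlog harith hRm hR0
      hindep ((hAm.mul hRm).add hBm) (fun ω => add_nonneg (hAR0 ω) (hB0 ω))
      hdist' hmom,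
    div_pos (integral_add_rpow_sub_rpow_pos hAR0 hB0 hBpos hκ hmom) (mul_pos hκ hpow_pos)⟩
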